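/- Let φ = C_1 ∧ ⋯ ∧ C_k be a 3-SAT formula in Boolean variables y_1, …, y_n, where each clause C_i = y_{i_1}^{τ_{i_1}} ∨ y_{i_2}^{τ_{i_2}} ∨ y_{i_3}^{τ_{i_3}} is a disjunction of three literals on pairwise distinct variables (here y^1 = y and y^0 = ¬y). For 1 ≤ j ≤ n let h_j be the tropical polynomial x ↦ min(2x_j, x_j, 1) in n variables, and for 1 ≤ i ≤ k let f_i be the tropical product (0·x_{i_1} ⊕ τ_{i_1}) ⊙ (0·x_{i_2} ⊕ τ_{i_2}) ⊙ (0·x_{i_3} ⊕ τ_{i_3}). Then the tropical prevariety P = ⋂_{j=1}^n T(h_j) ∩ ⋂_{i=1}^k T(f_i) equals {(s(a_1), …, s(a_n)) : a ∈ {True, False}^n is a satisfying assignment of φ}, where s(True) = 1 and s(False) = 0. In particular, P is nonempty if and only if φ is satisfiable. -/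

import Mathlib

open Finset Pointwise

/-- The affine-linear function given by a tropical term with coefficient `c`
and exponent vector `α`. -/
def tropTerm {n : ℕ} (c : ℝ) (α : Fin n → ℕ) (x : Fin n → ℝ) : ℝ :=
  c + ∑ j, (α j : ℝ) * x j

/-- The tropical hypersurface of the tropical polynomial with support `A`
and coefficients `c`: the set of points where the minimum of the terms is
attained at least twice. -/
def tropHyp {n : ℕ} (A : Finset (Fin n → ℕ)) (c : (Fin n → ℕ) → ℝ) :
    Set (Fin n → ℝ) :=
  {x | ∃ α ∈ A, ∃ β ∈ A, α ≠ β ∧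
    tropTerm (c α) α x = tropTerm (c β) β x ∧
    ∀ γ ∈ A, tropTerm (c α) α x ≤ tropTerm (c γ) γ x}

/-- A tropical polynomial: a (finite) support of exponent vectors, and coefficients. -/
structure TropPoly (n : ℕ) where
  supp : Finset (Fin n → ℕ)
  coeff : (Fin n → ℕ) → ℝ

def TropPoly.hyp {n : ℕ} (f : TropPoly n) : Set (Fin n → ℝ) :=
  tropHyp f.supp f.coeff

/-- Tropical product of two tropical polynomials. -/
noncomputable def TropPoly.mul {n : ℕ} (f g : TropPoly n) : TropPoly n where
  supp := f.supp + g.supp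
  coeff := fun γ =>
    sInf {r | ∃ α ∈ f.supp, ∃ β ∈ g.supp, α + β = γ ∧ r = f.coeff α + g.coeff β}

/-- The tropical multiplicative unit (the constant polynomial `0`). -/
def TropPoly.one (n : ℕ) : TropPoly n := ⟨{0}, fun _ => 0⟩

/-- Tropical product of a list of tropical polynomials. -/
noncomputable def TropPoly.listProd {n : ℕ} (l : List (TropPoly n)) : TropPoly n :=
  l.foldr TropPoly.mul (TropPoly.one n)

/-- The exponent vector `k · e_i`. -/
def single {n : ℕ} (i : Fin n) (k : ℕ) : Fin n → ℕ :=
  fun j => if j = i then k else 0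

/-- The structural tropical polynomial `h_j = 0·x_j² ⊕ 0·x_j ⊕ 1`. -/
def structuralPoly {n : ℕ} (j : Fin n) : TropPoly n :=
  ⟨{single j 2, single j 1, 0}, fun α => if α = 0 then (1 : ℝ) else 0⟩

/-- The tropical polynomial `0·x_j ⊕ τ` encoding the literal `y_j^τ`
(with `s(True) = 1`, `s(False) = 0`). -/
def literalPoly {n : ℕ} (j : Fin n) (τ : Bool) : TropPoly n :=
  ⟨{single j 1, 0}, fun α => if α = 0 then (if τ then (1 : ℝ) else 0) else 0⟩

/-- The clause tropical polynomial
`f_i = (0·x_{i₁} ⊕ τ_{i₁}) ⊙ (0·x_{i₂} ⊕ τ_{i₂}) ⊙ (0·x_{i₃} ⊕ τ_{i₃})`. -/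
noncomputable def clausePoly {n : ℕ} (idx : Fin 3 → Fin n) (τ : Fin 3 → Bool) :
    TropPoly n :=
  TropPoly.listProd [literalPoly (idx 0) (τ 0), literalPoly (idx 1) (τ 1),
    literalPoly (idx 2) (τ 2)]

/-- A Boolean assignment `a` satisfies the 3-SAT formula with clauses given by
variable indices `idx i` and signs `sgn i` (literal `y^1 = y`, `y^0 = ¬y`) iff
in every clause some literal evaluates to `True`. -/
def Satisfies {n k : ℕ} (idx : Fin k → Fin 3 → Fin n)
    (sgn : Fin k → Fin 3 → Bool) (a : Fin n → Bool) : Prop :=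
  ∀ i : Fin k, ∃ r : Fin 3, a (idx i r) = sgn i r

/-!
The exponents at which a tropical polynomial attains its minimum at `x` form its *initial support*
at `x`, and `x` lies on the hypersurface exactly when the initial support has at least two
elements. The initial support of `f ⊙ g` is the Minkowski sum of those of `f` and `g`; since `ℕ^n`
is cancellative, such a sum has at least two elements iff one of the summands does, so
`T(f ⊙ g) = T(f) ∪ T(g)`. Since `T(0·x_j ⊕ τ)` is the hyperplane `x_j = τ`, the hypersurface of a
product of literals is the union of these hyperplanes, and its 0/1-points, the only ones that lie on
every `T(h_j) = {x_j = 0} ∪ {x_j = 1}`, are the assignments satisfying the clause.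
-/

section Exponents

variable {n : ℕ}

theorem single_eq_piSingle (i : Fin n) (k : ℕ) : single i k = Pi.single i k := by
  ext j
  simp [single, Pi.single_apply]

theorem single_injective (i : Fin n) : Function.Injective (single i) := by
  simpa only [funext (single_eq_piSingle i)] using Pi.single_injective i

theorem single_eq_zero_iff {i : Fin n} {k : ℕ} : single i k = 0 ↔ k = 0 := by
  rw [single_eq_piSingle, Pi.single_eq_zero_iff]

theorem tropTerm_add_add (c d : ℝ) (α β : Fin n → ℕ) (x : Fin n → ℝ) :
    tropTerm (c + d) (α + β) x = tropTerm c α x + tropTerm d β x := by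
  simp only [tropTerm, Pi.add_apply, Nat.cast_add, add_mul, sum_add_distrib]
  ring

theorem tropTerm_single (c : ℝ) (i : Fin n) (k : ℕ) (x : Fin n → ℝ) :
    tropTerm c (single i k) x = c + k * x i := by
  simp [tropTerm, single]

theorem tropTerm_zero (c : ℝ) (x : Fin n → ℝ) : tropTerm c 0 x = c := by
  simp [tropTerm]

end Exponents

section Hypersurfaces

variable {n : ℕ} {α β γ : Fin n → ℕ} {c : (Fin n → ℕ) → ℝ} {x : Fin n → ℝ}

theorem mem_tropHyp_pair (hαβ : α ≠ β) :
    x ∈ tropHyp {α, β} c ↔ tropTerm (c α) α x = tropTerm (c β) β x := by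
  simp only [tropHyp, Set.mem_ofPred_eq, mem_insert, mem_singleton]
  grind

theorem mem_tropHyp_triple (hαβ : α ≠ β) (hαγ : α ≠ γ) (hβγ : β ≠ γ) :
    x ∈ tropHyp {α, β, γ} c ↔
      (tropTerm (c α) α x = tropTerm (c β) β x ∧ tropTerm (c α) α x ≤ tropTerm (c γ) γ x) ∨
      (tropTerm (c α) α x = tropTerm (c γ) γ x ∧ tropTerm (c α) α x ≤ tropTerm (c β) β x) ∨
      (tropTerm (c β) β x = tropTerm (c γ) γ x ∧ tropTerm (c β) β x ≤ tropTerm (c α) α x) := by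
  simp only [tropHyp, Set.mem_ofPred_eq, mem_insert, mem_singleton]
  grind

end Hypersurfaces

theorem nontrivial_add_iff {M : Type*} [Add M] [IsCancelAdd M] {s t : Set M}
    (hs : s.Nonempty) (ht : t.Nonempty) :
    (s + t).Nontrivial ↔ s.Nontrivial ∨ t.Nontrivial := by
  refine ⟨fun h => ?_, fun h => h.elim (·.add_right ht) (·.add_left hs)⟩
  by_contra! hsub
  exact h.not_subsingleton (hsub.1.image2 hsub.2 _)

namespace TropPoly

variable {n : ℕ}

/-- The value at `x` of the term of `f` with exponent `α`; it is a term of `f` only for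
`α ∈ f.supp`. -/
def term (f : TropPoly n) (x : Fin n → ℝ) (α : Fin n → ℕ) : ℝ :=
  tropTerm (f.coeff α) α x

/-- The initial support of `f` at `x`: the exponents of the terms attaining the minimum `f x`, i.e.
the support of the initial form of `f` at `x`. -/
def initialSupp (f : TropPoly n) (x : Fin n → ℝ) : Set (Fin n → ℕ) :=
  {α ∈ f.supp | ∀ γ ∈ f.supp, f.term x α ≤ f.term x γ}

variable {f g : TropPoly n} {x : Fin n → ℝ} {α β γ : Fin n → ℕ}

theorem initialSupp_nonempty (hf : f.supp.Nonempty) (x : Fin n → ℝ) :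
    (f.initialSupp x).Nonempty :=
  exists_min_image f.supp (f.term x) hf

theorem mem_hyp_iff_initialSupp_nontrivial : x ∈ f.hyp ↔ (f.initialSupp x).Nontrivial := by
  constructor
  · rintro ⟨α, hα, β, hβ, hne, heq, hmin⟩
    exact ⟨α, ⟨hα, hmin⟩, β, ⟨hβ, fun γ hγ => heq.symm.trans_le (hmin γ hγ)⟩, hne⟩
  · rintro ⟨α, ⟨hα, hαmin⟩, β, ⟨hβ, hβmin⟩, hne⟩
    exact ⟨α, hα, β, hβ, hne, (hαmin β hβ).antisymm (hβmin α hα), hαmin⟩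

theorem finite_coeff_add_coeff (f g : TropPoly n) (γ : Fin n → ℕ) :
    {r | ∃ α ∈ f.supp, ∃ β ∈ g.supp, α + β = γ ∧ r = f.coeff α + g.coeff β}.Finite := by
  refine ((f.supp.finite_toSet.image f.coeff).add (g.supp.finite_toSet.image g.coeff)).subset ?_
  rintro r ⟨α, hα, β, hβ, -, rfl⟩
  exact Set.add_mem_add (Set.mem_image_of_mem _ hα) (Set.mem_image_of_mem _ hβ)

theorem term_mul_add_le (hα : α ∈ f.supp) (hβ : β ∈ g.supp) (x : Fin n → ℝ) :
    (f.mul g).term x (α + β) ≤ f.term x α + g.term x β := by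
  have hcoeff : (f.mul g).coeff (α + β) ≤ f.coeff α + g.coeff β :=
    csInf_le (finite_coeff_add_coeff f g _).bddBelow ⟨α, hα, β, hβ, rfl, rfl⟩
  calc (f.mul g).term x (α + β)
      ≤ tropTerm (f.coeff α + g.coeff β) (α + β) x := by unfold term tropTerm; gcongr
    _ = f.term x α + g.term x β := tropTerm_add_add ..

theorem exists_term_mul_eq (hγ : γ ∈ (f.mul g).supp) (x : Fin n → ℝ) :
    ∃ α ∈ f.supp, ∃ β ∈ g.supp, α + β = γ ∧ (f.mul g).term x γ = f.term x α + g.term x β := by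
  obtain ⟨α₀, hα₀, β₀, hβ₀, hγ₀⟩ := mem_add.1 hγ
  have hne : {r | ∃ α ∈ f.supp, ∃ β ∈ g.supp, α + β = γ ∧ r = f.coeff α + g.coeff β}.Nonempty :=
    ⟨_, α₀, hα₀, β₀, hβ₀, hγ₀, rfl⟩
  obtain ⟨α, hα, β, hβ, rfl, hcoeff⟩ := hne.csInf_mem (finite_coeff_add_coeff f g γ)
  refine ⟨α, hα, β, hβ, rfl, ?_⟩
  calc (f.mul g).term x (α + β)
      = tropTerm (f.coeff α + g.coeff β) (α + β) x := congrArg (tropTerm · _ x) hcoeff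
    _ = f.term x α + g.term x β := tropTerm_add_add ..

theorem initialSupp_mul (f g : TropPoly n) (x : Fin n → ℝ) :
    (f.mul g).initialSupp x = f.initialSupp x + g.initialSupp x := by
  ext γ
  constructor
  · rintro ⟨hγ, hmin⟩
    obtain ⟨α, hα, β, hβ, rfl, hterm⟩ := exists_term_mul_eq hγ x
    refine Set.add_mem_add ⟨hα, fun α' hα' => ?_⟩ ⟨hβ, fun β' hβ' => ?_⟩
    · have := (hmin _ (add_mem_add hα' hβ)).trans (term_mul_add_le hα' hβ x)
      linarith
    · have := (hmin _ (add_mem_add hα hβ')).trans (term_mul_add_le hα hβ' x)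
      linarith
  · rintro ⟨α, ⟨hα, hαmin⟩, β, ⟨hβ, hβmin⟩, rfl⟩
    refine ⟨add_mem_add hα hβ, fun γ hγ => ?_⟩
    obtain ⟨α', hα', β', hβ', rfl, hterm⟩ := exists_term_mul_eq hγ x
    calc (f.mul g).term x (α + β)
        ≤ f.term x α + g.term x β := term_mul_add_le hα hβ x
      _ ≤ f.term x α' + g.term x β' := add_le_add (hαmin α' hα') (hβmin β' hβ')
      _ = (f.mul g).term x (α' + β') := hterm.symm

theorem hyp_mul (hf : f.supp.Nonempty) (hg : g.supp.Nonempty) :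
    (f.mul g).hyp = f.hyp ∪ g.hyp := by
  ext x
  rw [Set.mem_union]
  simp only [mem_hyp_iff_initialSupp_nontrivial, initialSupp_mul]
  exact nontrivial_add_iff (initialSupp_nonempty hf x) (initialSupp_nonempty hg x)

theorem hyp_one : (one n).hyp = ∅ := by
  ext x
  simp [hyp, tropHyp, one]

theorem supp_listProd_nonempty {l : List (TropPoly n)} (hl : ∀ f ∈ l, f.supp.Nonempty) :
    (listProd l).supp.Nonempty := by
  induction l with
  | nil => exact singleton_nonempty 0
  | cons f l ih =>
    rw [List.forall_mem_cons] at hl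
    exact hl.1.add (ih hl.2)

theorem hyp_listProd {l : List (TropPoly n)} (hl : ∀ f ∈ l, f.supp.Nonempty) :
    (listProd l).hyp = ⋃ f ∈ l, f.hyp := by
  induction l with
  | nil => simpa [listProd] using hyp_one
  | cons f l ih =>
    rw [List.forall_mem_cons] at hl
    calc (f.mul (listProd l)).hyp
        = f.hyp ∪ (listProd l).hyp := hyp_mul hl.1 (supp_listProd_nonempty hl.2)
      _ = ⋃ g ∈ f :: l, g.hyp := by simp [ih hl.2, Set.iUnion_or, Set.iUnion_union_distrib]

end TropPoly

section Encoding

variable {n : ℕ}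

theorem mem_hyp_structuralPoly {j : Fin n} {x : Fin n → ℝ} :
    x ∈ (structuralPoly j).hyp ↔ x j = 0 ∨ x j = 1 := by
  have h₂₁ : single j 2 ≠ single j 1 := (single_injective j).ne (by norm_num)
  have h₂₀ : single j 2 ≠ 0 := single_eq_zero_iff.not.2 two_ne_zero
  have h₁₀ : single j 1 ≠ 0 := single_eq_zero_iff.not.2 one_ne_zero
  have hmin : x ∈ (structuralPoly j).hyp ↔
      (2 * x j = x j ∧ 2 * x j ≤ 1) ∨ (2 * x j = 1 ∧ 2 * x j ≤ x j) ∨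
        (x j = 1 ∧ x j ≤ 2 * x j) := by
    simp [TropPoly.hyp, structuralPoly, mem_tropHyp_triple h₂₁ h₂₀ h₁₀, h₂₀, h₁₀,
      tropTerm_single, tropTerm_zero]
  rw [hmin]
  constructor
  · rintro (⟨h, -⟩ | ⟨h, hle⟩ | ⟨h, -⟩)
    · left; linarith
    · linarith
    · exact Or.inr h
  · rintro (h | h) <;> norm_num [h]

theorem supp_literalPoly_nonempty (j : Fin n) (τ : Bool) : (literalPoly j τ).supp.Nonempty :=
  insert_nonempty _ _

theorem mem_hyp_literalPoly {j : Fin n} {τ : Bool} {x : Fin n → ℝ} :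
    x ∈ (literalPoly j τ).hyp ↔ x j = if τ then 1 else 0 := by
  have h₁₀ : single j 1 ≠ 0 := single_eq_zero_iff.not.2 one_ne_zero
  simp [TropPoly.hyp, literalPoly, mem_tropHyp_pair h₁₀, h₁₀, tropTerm_single, tropTerm_zero]

/-- The tropical product encoding the disjunction of the literals `y_{idx r}^{τ r}` of a clause of
arbitrary length `m`; `clausePoly` is the case `m = 3`. -/
noncomputable def disjunctionPoly {m : ℕ} (idx : Fin m → Fin n) (τ : Fin m → Bool) : TropPoly n :=
  TropPoly.listProd (List.ofFn fun r => literalPoly (idx r) (τ r))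

theorem mem_hyp_disjunctionPoly {m : ℕ} {idx : Fin m → Fin n} {τ : Fin m → Bool}
    {x : Fin n → ℝ} :
    x ∈ (disjunctionPoly idx τ).hyp ↔ ∃ r, x (idx r) = if τ r then 1 else 0 := by
  have hsupp : ∀ f ∈ List.ofFn fun r => literalPoly (idx r) (τ r), f.supp.Nonempty := by
    simp [List.mem_ofFn, supp_literalPoly_nonempty]
  simp [disjunctionPoly, TropPoly.hyp_listProd hsupp, mem_hyp_literalPoly]

/-- The point `(s(a_1), …, s(a_n))` of an assignment `a`, where `s(True) = 1` and
`s(False) = 0`. -/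
def boolPoint {ι : Type*} (a : ι → Bool) : ι → ℝ :=
  fun j => if a j then 1 else 0

theorem range_boolPoint {ι : Type*} :
    Set.range (boolPoint (ι := ι)) = {x | ∀ j, x j = 0 ∨ x j = 1} := by
  ext x
  constructor
  · rintro ⟨a, rfl⟩ j
    cases h : a j <;> simp [boolPoint, h]
  · intro hx
    refine ⟨fun j => decide (x j = 1), funext fun j => ?_⟩
    rcases hx j with h | h <;> simp [boolPoint, h]

theorem iInter_hyp_structuralPoly :
    ⋂ j : Fin n, (structuralPoly j).hyp = Set.range boolPoint := by
  ext x
  simp [range_boolPoint, mem_hyp_structuralPoly]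

theorem boolPoint_mem_hyp_disjunctionPoly {m : ℕ} {idx : Fin m → Fin n} {τ : Fin m → Bool}
    {a : Fin n → Bool} :
    boolPoint a ∈ (disjunctionPoly idx τ).hyp ↔ ∃ r, a (idx r) = τ r := by
  refine mem_hyp_disjunctionPoly.trans (exists_congr fun r => ?_)
  cases h : a (idx r) <;> cases τ r <;> simp [boolPoint, h]

end Encoding

theorem sat_prevariety_general {n : ℕ} {ι : Type*} (m : ι → ℕ) (idx : ∀ i, Fin (m i) → Fin n)
    (sgn : ∀ i, Fin (m i) → Bool) :
    ((⋂ j : Fin n, (structuralPoly j).hyp) ∩ ⋂ i, (disjunctionPoly (idx i) (sgn i)).hyp)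
      = {x | ∃ a : Fin n → Bool, (∀ i, ∃ r, a (idx i r) = sgn i r) ∧ x = boolPoint a} ∧
    (((⋂ j : Fin n, (structuralPoly j).hyp) ∩
        ⋂ i, (disjunctionPoly (idx i) (sgn i)).hyp).Nonempty ↔
      ∃ a : Fin n → Bool, ∀ i, ∃ r, a (idx i r) = sgn i r) := by
  have hpoints : ((⋂ j : Fin n, (structuralPoly j).hyp) ∩
      ⋂ i, (disjunctionPoly (idx i) (sgn i)).hyp)
        = {x | ∃ a : Fin n → Bool, (∀ i, ∃ r, a (idx i r) = sgn i r) ∧ x = boolPoint a} := by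
    rw [iInter_hyp_structuralPoly]
    ext x
    constructor
    · rintro ⟨⟨a, rfl⟩, hclauses⟩
      exact ⟨a, fun i => boolPoint_mem_hyp_disjunctionPoly.1 (Set.mem_iInter.1 hclauses i), rfl⟩
    · rintro ⟨a, ha, rfl⟩
      exact ⟨⟨a, rfl⟩, Set.mem_iInter.2 fun i => boolPoint_mem_hyp_disjunctionPoly.2 (ha i)⟩
  refine ⟨hpoints, ?_⟩
  rw [hpoints]
  exact ⟨fun ⟨_, a, ha, _⟩ => ⟨a, ha⟩, fun ⟨a, ha⟩ => ⟨_, a, ha, rfl⟩⟩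

/-- The tropical prevariety built from the structural hypersurfaces `T(h_j)`
and the clause hypersurfaces `T(f_i)` of a 3-SAT formula equals the set of
0/1-points corresponding to satisfying assignments; in particular it is
nonempty iff the formula is satisfiable. -/
theorem sat_prevariety (n k : ℕ) (idx : Fin k → Fin 3 → Fin n)
    (sgn : Fin k → Fin 3 → Bool)
    (hdistinct : ∀ i, Function.Injective (idx i)) :
    ((⋂ j : Fin n, (structuralPoly j).hyp) ∩
        ⋂ i : Fin k, (clausePoly (idx i) (sgn i)).hyp)
      = {x : Fin n → ℝ | ∃ a : Fin n → Bool, Satisfies idx sgn a ∧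
          x = fun j => if a j then 1 else 0} ∧
    (((⋂ j : Fin n, (structuralPoly j).hyp) ∩
        ⋂ i : Fin k, (clausePoly (idx i) (sgn i)).hyp).Nonempty ↔
      ∃ a : Fin n → Bool, Satisfies idx sgn a) := by
  exact sat_prevariety_general (fun _ => 3) idx sgn
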